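/- Let θ > 0, 0 < s < r, and Y : B̄_r → ℝ^m be a smooth vector field flat at the origin with ‖Y‖_{0,r} < (r−s)·θ and ‖Y‖_{1,r} < θ, where θ is small enough (depending only on m) that the time-one flow φ_Y : B̄_s → B_r is defined. Then for all n, k ∈ ℕ there exists a constant C = C(n,k,r) > 0, depending continuously on r, such that for every smooth function f on B̄_r flat at the origin, ⟨f ∘ φ_Y⟩_{n,k,s} ≤ C · ( ⟨f⟩_{n,k,r} + ⟨f⟩_{0,k,r} · ‖Y‖_{n+1,r} ). -/

import Mathlib

open Metric Set

/-- The `C^n` norm of a vector field on the closed ball. -/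
noncomputable def cnNorm (m : ℕ) (r : ℝ) (n : ℕ)
    (F : EuclideanSpace ℝ (Fin m) → EuclideanSpace ℝ (Fin m)) : ℝ :=
  ⨆ p : (closedBall (0 : EuclideanSpace ℝ (Fin m)) r :
      Set (EuclideanSpace ℝ (Fin m))) × Fin (n + 1),
    ‖iteratedFDerivWithin ℝ p.2 F (closedBall 0 r) p.1‖

/-- A vector field flat at the origin. -/
def FlatVF (m : ℕ) (r : ℝ)
    (V : EuclideanSpace ℝ (Fin m) → EuclideanSpace ℝ (Fin m)) : Prop :=
  ∀ i : ℕ, iteratedFDerivWithin ℝ i V (closedBall 0 r) 0 = 0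

/-- The weighted norm `⟨f⟩_{n,k,r}` on flat functions on the closed ball. -/
noncomputable def flatNorm (m : ℕ) (r : ℝ) (n k : ℕ)
    (f : EuclideanSpace ℝ (Fin m) → ℝ) : ℝ :=
  ⨆ p : (closedBall (0 : EuclideanSpace ℝ (Fin m)) r \ {0} :
      Set (EuclideanSpace ℝ (Fin m))) × Fin (n + 1),
    ‖(p.1 : EuclideanSpace ℝ (Fin m))‖ ^ (-(k : ℤ)) *
      ‖iteratedFDerivWithin ℝ p.2 f (closedBall 0 r) p.1‖

/-!
The heart of the matter is a Landau–Kolmogorov inequality on balls: for a flat map the weighted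
suprema `‖x‖⁻ᵏ ‖Dʲ g x‖` are log-convex in `j` up to a constant, because on the ball of radius
`‖x‖` one can either take a step of the optimal size or, if that step is too long, use the vanishing
of the derivative at the origin. Choose a scale `B ≥ 1` with
`⟨f⟩_{0,k} Bⁿ = ⟨f⟩_{n,k} + ⟨f⟩_{0,k} ‖Y‖_{n+1}`. Interpolation then gives `‖Dʲ f x‖` of size
`⟨f⟩_{0,k} Bʲ ‖x‖ᵏ` and `‖Dʲ⁺¹ Y‖` of size `Bʲ`. The Euler iterates of `Y` inherit bounds
`‖Dⁱ⁺¹‖ ≲ Bⁱ` from Faà di Bruno's formula and a discrete Gronwall argument in which the top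
derivative enters linearly; the same Landau inequality upgrades their uniform convergence to
convergence of all derivatives, so the time-one flow is smooth and obeys these bounds. Finally each
term of Faà di Bruno's formula for `f ∘ ψ¹` is of size `⟨f⟩_{0,k} Bⁿ ‖x‖ᵏ`.
-/

section Landau

variable {E F : Type*} [NormedAddCommGroup E] [NormedSpace ℝ E]
  [NormedAddCommGroup F] [NormedSpace ℝ F]

lemma norm_sub_sub_apply_le_of_lipschitz_fderiv {S : Set E} (hS : Convex ℝ S) {G : E → F}
    {G' : E → E →L[ℝ] F} {c : ℝ} (hc : 0 ≤ c)
    (hG : ∀ x ∈ S, HasFDerivWithinAt G (G' x) S x)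
    (hG' : ∀ x ∈ S, ∀ y ∈ S, ‖G' y - G' x‖ ≤ c * ‖y - x‖) {x y : E} (hx : x ∈ S) (hy : y ∈ S) :
    ‖G y - G x - G' x (y - x)‖ ≤ c * ‖y - x‖ ^ 2 := by
  have hsub : segment ℝ x y ⊆ S := hS.segment_subset hx hy
  have hderiv : ∀ z ∈ segment ℝ x y, ‖G' z - G' x‖ ≤ c * ‖y - x‖ := fun z hz ↦ by
    refine (hG' x hx z (hsub hz)).trans (mul_le_mul_of_nonneg_left ?_ hc)
    simpa only [norm_sub_rev] using norm_sub_le_of_mem_segment hz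
  calc ‖G y - G x - G' x (y - x)‖ ≤ c * ‖y - x‖ * ‖y - x‖ :=
        (convex_segment x y).norm_image_sub_le_of_norm_hasFDerivWithin_le'
          (fun z hz ↦ (hG z (hsub hz)).mono hsub) hderiv
          (left_mem_segment ℝ x y) (right_mem_segment ℝ x y)
    _ = c * ‖y - x‖ ^ 2 := by ring

lemma norm_fderiv_le_of_landau_closedBall {R : ℝ} {G : E → F} {G' : E → E →L[ℝ] F} {a c : ℝ}
    (hc : 0 ≤ c)
    (hG : ∀ x ∈ closedBall (0 : E) R, HasFDerivWithinAt G (G' x) (closedBall 0 R) x)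
    (hG' : ∀ x ∈ closedBall (0 : E) R, ∀ y ∈ closedBall (0 : E) R,
      ‖G' y - G' x‖ ≤ c * ‖y - x‖)
    (ha : ∀ x ∈ closedBall (0 : E) R, ‖G x‖ ≤ a) {h : ℝ} (hh : 0 < h) (hhR : h ≤ R)
    {x : E} (hx : x ∈ closedBall (0 : E) R) :
    ‖G' x‖ ≤ 4 * a / h + 8 * c * h := by
  have hR : 0 < R := hh.trans_le hhR
  have ha0 : 0 ≤ a := (norm_nonneg _).trans (ha x hx)
  set t := h / R
  have htR : t * R = h := div_mul_cancel₀ h hR.ne'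
  have ht : 0 < t := by positivity
  -- Moving from `x` towards a point `w` of the ball stays in the ball, even when `x` is on
  -- the boundary; a general direction is the difference of two such moves.
  have hmove : ∀ w ∈ closedBall (0 : E) R, ‖G' x (t • (w - x))‖ ≤ 2 * a + 4 * c * h ^ 2 := by
    intro w hw
    set y := x + t • (w - x)
    have hyx : y - x = t • (w - x) := add_sub_cancel_left _ _
    have hy : y ∈ closedBall (0 : E) R :=
      (convex_closedBall (0 : E) R).add_smul_sub_mem hx hw ⟨ht.le, (div_le_one hR).2 hhR⟩
    have hdist : ‖y - x‖ ≤ 2 * h := by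
      rw [mem_closedBall_zero_iff] at hw hx
      rw [hyx, norm_smul, Real.norm_of_nonneg ht.le, ← htR]
      nlinarith [norm_sub_le w x]
    have htaylor := norm_sub_sub_apply_le_of_lipschitz_fderiv (convex_closedBall (0 : E) R)
      hc hG hG' hx hy
    calc ‖G' x (t • (w - x))‖ = ‖G y - G x - (G y - G x - G' x (y - x))‖ := by
          rw [sub_sub_cancel, hyx]
      _ ≤ ‖G y‖ + ‖G x‖ + ‖G y - G x - G' x (y - x)‖ :=
          (norm_sub_le _ _).trans (add_le_add_left (norm_sub_le _ _) _)
      _ ≤ a + a + c * (2 * h) ^ 2 := by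
          gcongr
          exacts [ha y hy, ha x hx, htaylor.trans (by gcongr)]
      _ = 2 * a + 4 * c * h ^ 2 := by ring
  refine ContinuousLinearMap.opNorm_le_of_unit_norm (by positivity) fun u hu ↦ ?_
  have hRu : R • u ∈ closedBall (0 : E) R := by
    simp [norm_smul, hu, abs_of_pos hR]
  have hsplit : h • u = t • (R • u - x) - t • (0 - x) := by
    rw [← smul_sub, sub_sub_sub_cancel_right, sub_zero, smul_smul, htR]
  have hhu : h * ‖G' x u‖ ≤ 2 * (2 * a + 4 * c * h ^ 2) := by
    calc h * ‖G' x u‖ = ‖G' x (t • (R • u - x)) - G' x (t • (0 - x))‖ := by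
          rw [← map_sub, ← hsplit, map_smul, norm_smul, Real.norm_of_nonneg hh.le]
      _ ≤ _ := (norm_sub_le _ _).trans (add_le_add (hmove _ hRu) (hmove 0 (by simp [hR.le])))
      _ = 2 * (2 * a + 4 * c * h ^ 2) := by ring
  calc ‖G' x u‖ ≤ 2 * (2 * a + 4 * c * h ^ 2) / h := by rwa [le_div_iff₀' hh]
    _ = 4 * a / h + 8 * c * h := by field_simp; ring

lemma uniqueDiffOn_closedBall {r : ℝ} (hr : 0 < r) (x : E) :
    UniqueDiffOn ℝ (closedBall x r) :=
  uniqueDiffOn_convex (convex_closedBall _ _)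
    ⟨x, mem_interior_iff_mem_nhds.2 (closedBall_mem_nhds x hr)⟩

lemma hasFDerivWithinAt_iteratedFDerivWithin {S : Set E} (hS : UniqueDiffOn ℝ S) {g : E → F}
    (hg : ContDiffOn ℝ (⊤ : ℕ∞) g S) (j : ℕ) {x : E} (hx : x ∈ S) :
    HasFDerivWithinAt (iteratedFDerivWithin ℝ j g S)
      (iteratedFDerivWithin ℝ (j + 1) g S x).curryLeft S x :=
  (hg.ftaylorSeriesWithin hS).fderivWithin j (by exact_mod_cast WithTop.coe_lt_top j) x hx

lemma norm_curryLeft_sub_curryLeft {n : ℕ}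
    (p q : ContinuousMultilinearMap ℝ (fun _ : Fin (n + 1) ↦ E) F) :
    ‖p.curryLeft - q.curryLeft‖ = ‖p - q‖ :=
  ContinuousMultilinearMap.curryLeft_norm (p - q)

lemma norm_iteratedFDerivWithin_sub_le {S T : Set E} (hS : UniqueDiffOn ℝ S) {g : E → F}
    (hg : ContDiffOn ℝ (⊤ : ℕ∞) g S) (j : ℕ) (hT : Convex ℝ T) (hTS : T ⊆ S) {c : ℝ}
    (hc : ∀ x ∈ T, ‖iteratedFDerivWithin ℝ (j + 1) g S x‖ ≤ c) {x y : E} (hx : x ∈ T)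
    (hy : y ∈ T) :
    ‖iteratedFDerivWithin ℝ j g S y - iteratedFDerivWithin ℝ j g S x‖ ≤ c * ‖y - x‖ :=
  hT.norm_image_sub_le_of_norm_hasFDerivWithin_le
    (fun _ hz ↦ (hasFDerivWithinAt_iteratedFDerivWithin hS hg j (hTS hz)).mono hTS)
    (fun z hz ↦ (ContinuousMultilinearMap.curryLeft_norm _).trans_le (hc z hz)) hx hy

lemma norm_iteratedFDerivWithin_le_of_landau {S : Set E} (hS : UniqueDiffOn ℝ S) {ρ : ℝ}
    (hρS : closedBall 0 ρ ⊆ S) {g : E → F} (hg : ContDiffOn ℝ (⊤ : ℕ∞) g S) (j : ℕ) {a c : ℝ}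
    (ha : ∀ x ∈ closedBall (0 : E) ρ, ‖iteratedFDerivWithin ℝ j g S x‖ ≤ a)
    (hc : ∀ x ∈ closedBall (0 : E) ρ, ‖iteratedFDerivWithin ℝ (j + 2) g S x‖ ≤ c)
    {h : ℝ} (hh : 0 < h) (hhρ : h ≤ ρ) {x : E} (hx : x ∈ closedBall (0 : E) ρ) :
    ‖iteratedFDerivWithin ℝ (j + 1) g S x‖ ≤ 4 * a / h + 8 * c * h := by
  rw [← ContinuousMultilinearMap.curryLeft_norm]
  refine norm_fderiv_le_of_landau_closedBall
    (G' := fun x ↦ (iteratedFDerivWithin ℝ (j + 1) g S x).curryLeft)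
    ((norm_nonneg _).trans (hc x hx))
    (fun z hz ↦ (hasFDerivWithinAt_iteratedFDerivWithin hS hg j (hρS hz)).mono hρS)
    (fun y hy z hz ↦ ?_) ha hh hhρ hx
  rw [norm_curryLeft_sub_curryLeft]
  exact norm_iteratedFDerivWithin_sub_le hS hg (j + 1) (convex_closedBall _ _) hρS hc hy hz

lemma norm_iteratedFDerivWithin_le_of_landau_weighted {r : ℝ} {g : E → F} (hr : 0 < r)
    (hg : ContDiffOn ℝ (⊤ : ℕ∞) g (closedBall 0 r)) (j k : ℕ)
    (hg0 : iteratedFDerivWithin ℝ (j + 1) g (closedBall 0 r) 0 = 0) {a c : ℝ}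
    (ha₀ : 0 ≤ a) (hc₀ : 0 ≤ c)
    (ha : ∀ x ∈ closedBall (0 : E) r,
      ‖iteratedFDerivWithin ℝ j g (closedBall 0 r) x‖ ≤ a * ‖x‖ ^ k)
    (hc : ∀ x ∈ closedBall (0 : E) r,
      ‖iteratedFDerivWithin ℝ (j + 2) g (closedBall 0 r) x‖ ≤ c * ‖x‖ ^ k)
    {h : ℝ} (hh : 0 < h) {x : E} (hx : x ∈ closedBall (0 : E) r) :
    ‖iteratedFDerivWithin ℝ (j + 1) g (closedBall 0 r) x‖
      ≤ (4 * a / h + 8 * c * h) * ‖x‖ ^ k := by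
  have hball : closedBall (0 : E) ‖x‖ ⊆ closedBall 0 r :=
    closedBall_subset_closedBall (mem_closedBall_zero_iff.1 hx)
  have hxx : x ∈ closedBall (0 : E) ‖x‖ := mem_closedBall_zero_iff.2 le_rfl
  have hc' : ∀ y ∈ closedBall (0 : E) ‖x‖,
      ‖iteratedFDerivWithin ℝ (j + 2) g (closedBall 0 r) y‖ ≤ c * ‖x‖ ^ k := fun y hy ↦
    (hc y (hball hy)).trans (by have := mem_closedBall_zero_iff.1 hy; gcongr)
  rcases le_total h ‖x‖ with hle | hle
  · have ha' : ∀ y ∈ closedBall (0 : E) ‖x‖,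
        ‖iteratedFDerivWithin ℝ j g (closedBall 0 r) y‖ ≤ a * ‖x‖ ^ k := fun y hy ↦
      (ha y (hball hy)).trans (by have := mem_closedBall_zero_iff.1 hy; gcongr)
    refine (norm_iteratedFDerivWithin_le_of_landau (uniqueDiffOn_closedBall hr 0) hball hg j
      ha' hc' hh hle hxx).trans_eq (by ring)
  · have hmean := norm_iteratedFDerivWithin_sub_le (uniqueDiffOn_closedBall hr 0) hg (j + 1)
      (convex_closedBall (0 : E) ‖x‖) hball hc' (mem_closedBall_self (norm_nonneg x)) hxx
    rw [hg0, sub_zero, sub_zero] at hmean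
    calc _ ≤ c * ‖x‖ ^ k * ‖x‖ := hmean
      _ = c * ‖x‖ * ‖x‖ ^ k := by ring
      _ ≤ (4 * a / h + 8 * c * h) * ‖x‖ ^ k := by
        gcongr
        have : 0 ≤ 4 * a / h := by positivity
        nlinarith [mul_le_mul_of_nonneg_left hle hc₀, mul_nonneg hc₀ hh.le]

end Landau

section LogConvex

lemma le_one_of_sq_le_mul {n : ℕ} {e : ℕ → ℝ} (he : ∀ j, 0 ≤ e j) (he₀ : e 0 ≤ 1) (hen : e n ≤ 1)
    (hconv : ∀ j, j + 2 ≤ n → e (j + 1) ^ 2 ≤ e j * e (j + 2)) : ∀ j ≤ n, e j ≤ 1 := by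
  obtain ⟨j₀, hj₀, hmax⟩ := Finset.exists_max_image (Finset.range (n + 1)) e ⟨0, by simp⟩
  replace hmax : ∀ j ≤ n, e j ≤ e j₀ := fun j hj ↦ hmax j (Finset.mem_range_succ_iff.2 hj)
  suffices e j₀ ≤ 1 from fun j hj ↦ (hmax j hj).trans this
  by_contra! hlt
  classical
  have hex : ∃ j, j ≤ n ∧ e j = e j₀ := ⟨j₀, Finset.mem_range_succ_iff.1 hj₀, rfl⟩
  obtain ⟨hin, hi⟩ := Nat.find_spec hex
  have hfirst : ∀ j < Nat.find hex, ¬(j ≤ n ∧ e j = e j₀) := fun j ↦ Nat.find_min hex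
  -- At its first maximum the sequence would be strictly log-concave.
  generalize Nat.find hex = i at hin hi hfirst
  rcases i with _ | i
  · linarith
  have hne : i + 1 ≠ n := by rintro rfl; linarith
  have hprev : e i < e j₀ :=
    (hmax i (by omega)).lt_of_ne fun h ↦ hfirst i (by omega) ⟨by omega, h⟩
  have hsq := hconv i (by omega)
  rw [hi] at hsq
  nlinarith [hmax (i + 2) (by omega), he i, he (i + 2)]

lemma le_geometric_of_sq_le_mul {n : ℕ} {q : ℕ → ℝ} {a A c : ℝ} (ha : 0 < a) (hA : 0 < A)
    (hc : 0 < c) (hq : ∀ j, 0 ≤ q j) (hq₀ : q 0 ≤ a) (hqn : q n ≤ a * A ^ n)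
    (hconv : ∀ j, q (j + 1) ^ 2 ≤ c ^ 2 * (q j * q (j + 2))) :
    ∀ j ≤ n, q j ≤ c ^ (j * (n - j)) * a * A ^ j := by
  -- `j * (n - j)` has second difference `-2`, which absorbs the factor `c ^ 2`.
  set w : ℕ → ℝ := fun j ↦ c ^ (j * (n - j)) * a * A ^ j
  have hw : ∀ j, 0 < w j := fun j ↦ by positivity
  have hw_sq : ∀ j, j + 2 ≤ n → w (j + 1) ^ 2 = c ^ 2 * (w j * w (j + 2)) := by
    intro j hj
    obtain ⟨d, rfl⟩ := Nat.exists_eq_add_of_le hj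
    have h₀ : j + 2 + d - j = d + 2 := by omega
    have h₁ : j + 2 + d - (j + 1) = d + 1 := by omega
    have h₂ : j + 2 + d - (j + 2) = d := by omega
    simp only [w, h₀, h₁, h₂]
    ring
  have hquot := le_one_of_sq_le_mul (n := n) (e := fun j ↦ q j / w j)
    (fun j ↦ div_nonneg (hq j) (hw j).le)
    ((div_le_one (hw 0)).2 (by simpa [w] using hq₀))
    ((div_le_one (hw n)).2 (by simpa [w] using hqn)) (fun j hj ↦ ?_)
  · exact fun j hj ↦ (div_le_one (hw j)).1 (hquot j hj)
  calc (q (j + 1) / w (j + 1)) ^ 2 ≤ c ^ 2 * (q j * q (j + 2)) / (c ^ 2 * (w j * w (j + 2))) := by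
        rw [div_pow, hw_sq j hj]
        gcongr
        exact hconv j
    _ = q j / w j * (q (j + 2) / w (j + 2)) := by
        rw [mul_div_mul_left _ _ (by positivity), mul_div_mul_comm]

lemma sq_le_mul_of_forall_le_div_add_mul {p q s : ℝ} (hp : 0 ≤ p) (hq : 0 ≤ q) (hs : 0 ≤ s)
    (h : ∀ t : ℝ, 0 < t → q ≤ p / t + s * t) : q ^ 2 ≤ 4 * (p * s) := by
  have hquad : ∀ t : ℝ, 0 ≤ s * (t * t) + -q * t + p := fun t ↦ by
    rcases le_or_gt t 0 with ht | ht
    · nlinarith [mul_nonneg hs (mul_self_nonneg t), mul_nonneg hq (neg_nonneg.2 ht)]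
    · have hqt : q * t ≤ (p / t + s * t) * t := by gcongr; exact h t ht
      have hexp : (p / t + s * t) * t = p + s * (t * t) := by field_simp
      linarith
  have hdiscrim := discrim_le_zero hquad
  rw [discrim] at hdiscrim
  linarith

end LogConvex

section Flat

variable {E F : Type*} [NormedAddCommGroup E] [NormedSpace ℝ E]
  [NormedAddCommGroup F] [NormedSpace ℝ F] {r : ℝ} {g : E → F}

/-- `g` is smooth on the closed ball of radius `r` about the origin, with all derivatives bounded
on the ball and vanishing at the origin. In finite dimension boundedness is automatic. -/
structure IsFlatOn (r : ℝ) (g : E → F) : Prop where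
  contDiffOn : ContDiffOn ℝ (⊤ : ℕ∞) g (closedBall 0 r)
  iteratedFDerivWithin_zero : ∀ j, iteratedFDerivWithin ℝ j g (closedBall 0 r) 0 = 0
  exists_bound : ∀ j, ∃ K, ∀ x ∈ closedBall 0 r, ‖iteratedFDerivWithin ℝ j g (closedBall 0 r) x‖ ≤ K

lemma isFlatOn_of_finiteDimensional [FiniteDimensional ℝ E] (hr : 0 < r)
    (hg : ContDiffOn ℝ (⊤ : ℕ∞) g (closedBall 0 r))
    (hg₀ : ∀ j, iteratedFDerivWithin ℝ j g (closedBall 0 r) 0 = 0) : IsFlatOn r g where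
  contDiffOn := hg
  iteratedFDerivWithin_zero := hg₀
  exists_bound j :=
    have := FiniteDimensional.proper_real E
    (isCompact_closedBall (0 : E) r).exists_bound_of_continuousOn
      (hg.continuousOn_iteratedFDerivWithin (m := j) (by exact_mod_cast le_top)
        (uniqueDiffOn_closedBall hr 0))

lemma IsFlatOn.exists_bound_pow (hg : IsFlatOn r g) (hr : 0 < r) (k j : ℕ) :
    ∃ K, 0 ≤ K ∧ ∀ x ∈ closedBall (0 : E) r,
      ‖iteratedFDerivWithin ℝ j g (closedBall 0 r) x‖ ≤ K * ‖x‖ ^ k := by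
  induction k generalizing j with
  | zero =>
    obtain ⟨K, hK⟩ := hg.exists_bound j
    exact ⟨K, (norm_nonneg _).trans (hK 0 (mem_closedBall_self hr.le)), by simpa using hK⟩
  | succ k ih =>
    obtain ⟨K, hK₀, hK⟩ := ih (j + 1)
    refine ⟨K, hK₀, fun x hx ↦ ?_⟩
    have hball : closedBall (0 : E) ‖x‖ ⊆ closedBall 0 r :=
      closedBall_subset_closedBall (mem_closedBall_zero_iff.1 hx)
    have hmean := norm_iteratedFDerivWithin_sub_le (uniqueDiffOn_closedBall hr 0) hg.contDiffOn j
      (convex_closedBall (0 : E) ‖x‖) hball (c := K * ‖x‖ ^ k)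
      (fun y hy ↦ (hK y (hball hy)).trans (by have := mem_closedBall_zero_iff.1 hy; gcongr))
      (mem_closedBall_self (norm_nonneg x)) (mem_closedBall_zero_iff.2 le_rfl)
    rwa [hg.iteratedFDerivWithin_zero, sub_zero, sub_zero, mul_assoc, ← pow_succ] at hmean

lemma IsFlatOn.exists_bound_pow_of_le (hg : IsFlatOn r g) (hr : 0 < r) (n k : ℕ) :
    ∃ K, 0 ≤ K ∧ ∀ j ≤ n, ∀ x ∈ closedBall (0 : E) r,
      ‖iteratedFDerivWithin ℝ j g (closedBall 0 r) x‖ ≤ K * ‖x‖ ^ k := by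
  choose K hK₀ hK using hg.exists_bound_pow hr k
  refine ⟨∑ j ∈ Finset.range (n + 1), K j, Finset.sum_nonneg fun j _ ↦ hK₀ j, fun j hj x hx ↦ ?_⟩
  refine (hK j x hx).trans ?_
  gcongr
  exact Finset.single_le_sum (fun j _ ↦ hK₀ j) (Finset.mem_range_succ_iff.2 hj)

/-- The supremum over the closed ball of radius `r` of `‖x‖⁻ᵏ ‖Dʲ g x‖`, the best constant `K` in
`‖Dʲ g x‖ ≤ K ‖x‖ᵏ`. At `x = 0` and `k ≠ 0` the junk value `0⁻¹ = 0` discards the point. -/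
noncomputable def weightedSup (r : ℝ) (k j : ℕ) (g : E → F) : ℝ :=
  ⨆ x : closedBall (0 : E) r,
    ‖(x : E)‖ ^ (-(k : ℤ)) * ‖iteratedFDerivWithin ℝ j g (closedBall 0 r) x‖

lemma zpow_neg_mul_le_of_le_mul_pow {ρ b K : ℝ} {k : ℕ} (hρ : 0 ≤ ρ) (hK : 0 ≤ K)
    (hb : b ≤ K * ρ ^ k) : ρ ^ (-(k : ℤ)) * b ≤ K := by
  rw [zpow_neg, zpow_natCast]
  rcases (pow_nonneg hρ k).eq_or_lt with h | h
  · simpa [← h] using hK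
  · rwa [inv_mul_le_iff₀' h]

lemma weightedSup_nonneg (r : ℝ) (k j : ℕ) (g : E → F) : 0 ≤ weightedSup r k j g :=
  Real.iSup_nonneg fun _ ↦ by positivity

lemma weightedSup_le {k j : ℕ} {K : ℝ} (hK : 0 ≤ K)
    (h : ∀ x ∈ closedBall (0 : E) r,
      ‖iteratedFDerivWithin ℝ j g (closedBall 0 r) x‖ ≤ K * ‖x‖ ^ k) :
    weightedSup r k j g ≤ K :=
  Real.iSup_le (fun x ↦ zpow_neg_mul_le_of_le_mul_pow (norm_nonneg _) hK (h x x.2)) hK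

lemma IsFlatOn.norm_iteratedFDerivWithin_le_weightedSup (hg : IsFlatOn r g) (hr : 0 < r)
    (k j : ℕ) {x : E} (hx : x ∈ closedBall (0 : E) r) :
    ‖iteratedFDerivWithin ℝ j g (closedBall 0 r) x‖ ≤ weightedSup r k j g * ‖x‖ ^ k := by
  rcases eq_or_ne x 0 with rfl | hx₀
  · rw [hg.iteratedFDerivWithin_zero, norm_zero]
    exact mul_nonneg (weightedSup_nonneg r k j g) (by positivity)
  obtain ⟨K, hK₀, hK⟩ := hg.exists_bound_pow hr k j
  have hbdd : BddAbove (range fun x : closedBall (0 : E) r ↦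
      ‖(x : E)‖ ^ (-(k : ℤ)) * ‖iteratedFDerivWithin ℝ j g (closedBall 0 r) x‖) := by
    refine ⟨K, ?_⟩
    rintro _ ⟨y, rfl⟩
    exact zpow_neg_mul_le_of_le_mul_pow (norm_nonneg _) hK₀ (hK y y.2)
  have hle := le_ciSup hbdd ⟨x, hx⟩
  rwa [zpow_neg, zpow_natCast, inv_mul_le_iff₀' (by positivity)] at hle

lemma IsFlatOn.weightedSup_sq_le (hg : IsFlatOn r g) (hr : 0 < r) (k j : ℕ) :
    weightedSup r k (j + 1) g ^ 2
      ≤ 12 ^ 2 * (weightedSup r k j g * weightedSup r k (j + 2) g) := by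
  have hj := weightedSup_nonneg r k j g
  have hj₂ := weightedSup_nonneg r k (j + 2) g
  have hsq := sq_le_mul_of_forall_le_div_add_mul (mul_nonneg zero_le_four hj)
    (weightedSup_nonneg r k (j + 1) g) (mul_nonneg (by norm_num : (0 : ℝ) ≤ 8) hj₂) fun t ht ↦
      weightedSup_le (by positivity) fun x hx ↦
        norm_iteratedFDerivWithin_le_of_landau_weighted hr hg.contDiffOn j k
          (hg.iteratedFDerivWithin_zero _) hj hj₂
          (fun y hy ↦ hg.norm_iteratedFDerivWithin_le_weightedSup hr k j hy)
          (fun y hy ↦ hg.norm_iteratedFDerivWithin_le_weightedSup hr k (j + 2) hy) ht hx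
  nlinarith [mul_nonneg hj hj₂]

lemma IsFlatOn.norm_iteratedFDerivWithin_interpolation (hg : IsFlatOn r g) (hr : 0 < r)
    (k b n : ℕ) {a A : ℝ} (ha : 0 < a) (hA : 0 < A)
    (hlow : ∀ x ∈ closedBall (0 : E) r,
      ‖iteratedFDerivWithin ℝ b g (closedBall 0 r) x‖ ≤ a * ‖x‖ ^ k)
    (hhigh : ∀ x ∈ closedBall (0 : E) r,
      ‖iteratedFDerivWithin ℝ (b + n) g (closedBall 0 r) x‖ ≤ a * A ^ n * ‖x‖ ^ k)
    {j : ℕ} (hj : j ≤ n) {x : E} (hx : x ∈ closedBall (0 : E) r) :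
    ‖iteratedFDerivWithin ℝ (b + j) g (closedBall 0 r) x‖
      ≤ 12 ^ (n * n) * a * A ^ j * ‖x‖ ^ k := by
  refine (hg.norm_iteratedFDerivWithin_le_weightedSup hr k (b + j) hx).trans ?_
  gcongr
  calc weightedSup r k (b + j) g ≤ 12 ^ (j * (n - j)) * a * A ^ j :=
        le_geometric_of_sq_le_mul (q := fun i ↦ weightedSup r k (b + i) g) ha hA (by norm_num)
          (fun i ↦ weightedSup_nonneg r k _ g) (weightedSup_le ha.le hlow)
          (weightedSup_le (by positivity) hhigh)
          (fun i ↦ hg.weightedSup_sq_le hr k (b + i)) j hj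
    _ ≤ 12 ^ (n * n) * a * A ^ j := by
        gcongr
        exacts [by norm_num, Nat.sub_le n j]

end Flat

section Composition

variable {E F G : Type*} [NormedAddCommGroup E] [NormedSpace ℝ E] [NormedAddCommGroup F]
  [NormedSpace ℝ F] [NormedAddCommGroup G] [NormedSpace ℝ G] {S : Set E} {T : Set F}
  {g : F → G} {f : E → F} {x : E} {n : ℕ}

lemma sum_partSize_orderedFinpartition (c : OrderedFinpartition n) : ∑ m, c.partSize m = n := by
  simpa using c.sum_sigma_eq_sum (fun _ ↦ (1 : ℕ))

lemma norm_iteratedFDerivWithin_comp_le_card (hS : UniqueDiffOn ℝ S) (hT : UniqueDiffOn ℝ T)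
    (hg : ContDiffOn ℝ (⊤ : ℕ∞) g T) (hf : ContDiffOn ℝ (⊤ : ℕ∞) f S) (hST : MapsTo f S T)
    (hx : x ∈ S) {K A D : ℝ} (hK : 0 ≤ K) (hA : 0 ≤ A)
    (hgK : ∀ j ≤ n, (0 < n → 0 < j) → ‖iteratedFDerivWithin ℝ j g T (f x)‖ ≤ K * A ^ j)
    (hfD : ∀ i, 0 < i → i ≤ n → A * ‖iteratedFDerivWithin ℝ i f S x‖ ≤ D ^ i) :
    ‖iteratedFDerivWithin ℝ n (g ∘ f) S x‖
      ≤ Fintype.card (OrderedFinpartition n) * (K * D ^ n) := by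
  have hterm : ∀ c : OrderedFinpartition n,
      ‖(ftaylorSeriesWithin ℝ g T (f x)).compAlongOrderedFinpartition
        (ftaylorSeriesWithin ℝ f S x) c‖ ≤ K * D ^ n := fun c ↦ by
    calc _ ≤ ‖iteratedFDerivWithin ℝ c.length g T (f x)‖
          * ∏ m, ‖iteratedFDerivWithin ℝ (c.partSize m) f S x‖ :=
          c.norm_compAlongOrderedFinpartition_le _ _
      _ ≤ K * A ^ c.length * ∏ m, ‖iteratedFDerivWithin ℝ (c.partSize m) f S x‖ := by
          gcongr
          exact hgK _ c.length_le c.length_pos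
      _ = K * ∏ m, (A * ‖iteratedFDerivWithin ℝ (c.partSize m) f S x‖) := by
          rw [Finset.prod_mul_distrib, Finset.prod_const, Finset.card_univ, Fintype.card_fin,
            mul_assoc]
      _ ≤ K * ∏ m, D ^ c.partSize m := by
          gcongr with m
          exact hfD _ (c.partSize_pos m) (c.partSize_le m)
      _ = K * D ^ n := by
          rw [Finset.prod_pow_eq_pow_sum, sum_partSize_orderedFinpartition]
  rw [iteratedFDerivWithin_comp ((hg _ (hST hx)).of_le (by exact_mod_cast le_top))
    ((hf x hx).of_le (by exact_mod_cast le_top)) hT hS hx hST le_rfl]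
  refine (norm_sum_le_of_le _ fun c _ ↦ hterm c).trans_eq ?_
  rw [Finset.sum_const, Finset.card_univ, nsmul_eq_mul]

lemma norm_iteratedFDerivWithin_comp_le_of_top_order (hS : UniqueDiffOn ℝ S)
    (hT : UniqueDiffOn ℝ T) (hg : ContDiffOn ℝ (⊤ : ℕ∞) g T) (hf : ContDiffOn ℝ (⊤ : ℕ∞) f S)
    (hST : MapsTo f S T) (hx : x ∈ S) {K L c : ℝ} (hK : 0 ≤ K) (hL : 0 < L) (hc : 1 ≤ c)
    (hgK : ∀ j ≤ n, ‖iteratedFDerivWithin ℝ (j + 1) g T (f x)‖ ≤ K * L ^ j)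
    (hfc : ∀ i < n, ‖iteratedFDerivWithin ℝ (i + 1) f S x‖ ≤ c * L ^ i) :
    ‖iteratedFDerivWithin ℝ (n + 1) (g ∘ f) S x‖
      ≤ Fintype.card (OrderedFinpartition (n + 1)) * K * c ^ (n + 1)
        * (L ^ n + ‖iteratedFDerivWithin ℝ (n + 1) f S x‖) := by
  set u := ‖iteratedFDerivWithin ℝ (n + 1) f S x‖
  -- The top derivative of `f` occurs only linearly, so it may be as large as `Dⁿ⁺¹ / L`.
  set D := max (c * L) ((L * u) ^ ((n + 1 : ℕ) : ℝ)⁻¹)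
  have hroot : ((L * u) ^ ((n + 1 : ℕ) : ℝ)⁻¹) ^ (n + 1) = L * u :=
    Real.rpow_inv_natCast_pow (by positivity) n.succ_ne_zero
  have hD_le : D ^ (n + 1) ≤ (c * L) ^ (n + 1) + L * u := by
    rcases max_choice (c * L) ((L * u) ^ ((n + 1 : ℕ) : ℝ)⁻¹) with h | h <;>
      simp only [D, h, hroot] <;> linarith [show 0 ≤ L * u by positivity,
        show 0 ≤ (c * L) ^ (n + 1) by positivity]
  have hfD : ∀ i, 0 < i → i ≤ n + 1 → L * ‖iteratedFDerivWithin ℝ i f S x‖ ≤ D ^ i := by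
    intro i hi hin
    obtain ⟨i, rfl⟩ := Nat.exists_eq_add_of_le' hi
    rcases (Nat.le_of_succ_le_succ hin).lt_or_eq with hlt | rfl
    · calc L * ‖iteratedFDerivWithin ℝ (i + 1) f S x‖ ≤ L * (c * L ^ i) := by
            gcongr
            exact hfc i hlt
        _ = c * L ^ (i + 1) := by ring
        _ ≤ c ^ (i + 1) * L ^ (i + 1) := by gcongr; exact le_self_pow₀ hc i.succ_ne_zero
        _ = (c * L) ^ (i + 1) := (mul_pow _ _ _).symm
        _ ≤ D ^ (i + 1) := by gcongr; exact le_max_left _ _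
    · calc L * u = ((L * u) ^ ((i + 1 : ℕ) : ℝ)⁻¹) ^ (i + 1) := hroot.symm
        _ ≤ D ^ (i + 1) := by gcongr; exact le_max_right _ _
  have hgL : ∀ j ≤ n + 1, (0 < n + 1 → 0 < j) →
      ‖iteratedFDerivWithin ℝ j g T (f x)‖ ≤ K / L * L ^ j := by
    intro j hj hj₀
    obtain ⟨j, rfl⟩ := Nat.exists_eq_add_of_le' (hj₀ n.succ_pos)
    exact (hgK j (by omega)).trans_eq (by rw [pow_succ]; field_simp)
  calc _ ≤ Fintype.card (OrderedFinpartition (n + 1)) * (K / L * D ^ (n + 1)) :=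
        norm_iteratedFDerivWithin_comp_le_card hS hT hg hf hST hx (by positivity) hL.le hgL hfD
    _ ≤ Fintype.card (OrderedFinpartition (n + 1)) * (K / L * ((c * L) ^ (n + 1) + L * u)) := by
        gcongr
    _ = Fintype.card (OrderedFinpartition (n + 1)) * K * (c ^ (n + 1) * L ^ n + 1 * u) := by
        rw [mul_pow, pow_succ L]
        field_simp
    _ ≤ Fintype.card (OrderedFinpartition (n + 1)) * K * (c ^ (n + 1) * L ^ n + c ^ (n + 1) * u) :=
        by gcongr; exact one_le_pow₀ hc
    _ = _ := by ring

end Composition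

section Euler

lemma le_exp_mul_of_succ_le_one_add_mul {v : ℕ → ℝ} {c : ℝ} {N : ℕ} (hc : 0 ≤ c) (hv₀ : 0 ≤ v 0)
    (hv : ∀ q < N, v (q + 1) ≤ (1 + c) * v q) : v N ≤ Real.exp (N * c) * v 0 := by
  induction N with
  | zero => simp
  | succ N ih =>
    calc v (N + 1) ≤ (1 + c) * v N := hv N N.lt_succ_self
      _ ≤ (1 + c) * (Real.exp (N * c) * v 0) := by
          gcongr
          exact ih fun q hq ↦ hv q (hq.trans N.lt_succ_self)
      _ ≤ Real.exp c * (Real.exp (N * c) * v 0) := by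
          gcongr
          exact (add_comm 1 c).trans_le (Real.add_one_le_exp c)
      _ = Real.exp ((N + 1 : ℕ) * c) * v 0 := by
          rw [← mul_assoc, ← Real.exp_add]
          push_cast
          ring_nf

variable {E : Type*} [NormedAddCommGroup E] [NormedSpace ℝ E]

lemma norm_iteratedFDerivWithin_id_le {S : Set E} (hS : UniqueDiffOn ℝ S) {x : E} (hx : x ∈ S)
    (i : ℕ) : ‖iteratedFDerivWithin ℝ (i + 1) (id : E → E) S x‖ ≤ 1 := by
  have hfderiv : EqOn (fderivWithin ℝ id S) (fun _ ↦ ContinuousLinearMap.id ℝ E) S :=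
    fun y hy ↦ fderivWithin_id (hS y hy)
  rw [← norm_iteratedFDerivWithin_fderivWithin hS hx, iteratedFDerivWithin_congr hfderiv hx]
  rcases i with _ | i
  · simpa using ContinuousLinearMap.norm_id_le
  · simp [iteratedFDerivWithin_const_of_ne i.succ_ne_zero]

/-- One step of size `h` of the explicit Euler scheme for the vector field `Y`. -/
def eulerStep (Y : E → E) (h : ℝ) (x : E) : E := x + h • Y x

variable {r s b h : ℝ} {Y : E → E} {q : ℕ}

lemma norm_eulerStep_iterate_le (hb : 0 ≤ b) (hY : ∀ x ∈ closedBall (0 : E) r, ‖Y x‖ ≤ b)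
    (hh : 0 ≤ h) (hqr : s + q * h * b ≤ r) {x : E} (hx : ‖x‖ ≤ s) :
    ‖(eulerStep Y h)^[q] x‖ ≤ s + q * h * b := by
  induction q with
  | zero => simpa using hx
  | succ q ih =>
    have hhb : 0 ≤ h * b := mul_nonneg hh hb
    push_cast at hqr ⊢
    have hq := ih (by linarith)
    have hmem : (eulerStep Y h)^[q] x ∈ closedBall (0 : E) r :=
      mem_closedBall_zero_iff.2 (hq.trans (by linarith))
    rw [Function.iterate_succ_apply']
    calc _ ≤ ‖(eulerStep Y h)^[q] x‖ + ‖h • Y ((eulerStep Y h)^[q] x)‖ := norm_add_le _ _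
      _ ≤ (s + q * h * b) + h * b := by
          rw [norm_smul, Real.norm_of_nonneg hh]
          gcongr
          exact hY _ hmem
      _ = s + (q + 1) * h * b := by ring

lemma mapsTo_eulerStep_iterate (hb : 0 ≤ b) (hsb : s + b ≤ r)
    (hY : ∀ x ∈ closedBall (0 : E) r, ‖Y x‖ ≤ b) (hh : 0 ≤ h) (hqh : q * h ≤ 1) :
    MapsTo (eulerStep Y h)^[q] (closedBall 0 s) (closedBall 0 r) := by
  have hqr : s + q * h * b ≤ r := by nlinarith
  exact fun x hx ↦ mem_closedBall_zero_iff.2 <|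
    (norm_eulerStep_iterate_le hb hY hh hqr (mem_closedBall_zero_iff.1 hx)).trans hqr

lemma contDiffOn_eulerStep_iterate (hb : 0 ≤ b) (hsb : s + b ≤ r)
    (hY : ∀ x ∈ closedBall (0 : E) r, ‖Y x‖ ≤ b)
    (hYc : ContDiffOn ℝ (⊤ : ℕ∞) Y (closedBall 0 r)) (hh : 0 ≤ h) (hqh : q * h ≤ 1) :
    ContDiffOn ℝ (⊤ : ℕ∞) (eulerStep Y h)^[q] (closedBall 0 s) := by
  induction q with
  | zero => exact contDiffOn_id
  | succ q ih =>
    have hqh' : q * h ≤ 1 := by push_cast at hqh; linarith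
    have hstep : ContDiffOn ℝ (⊤ : ℕ∞) (eulerStep Y h) (closedBall 0 r) :=
      contDiffOn_id.add (hYc.const_smul h)
    rw [Function.iterate_succ']
    exact hstep.comp (ih hqh') (mapsTo_eulerStep_iterate hb hsb hY hh hqh')

lemma norm_iteratedFDerivWithin_eulerStep_comp_le {S T : Set E} (hS : UniqueDiffOn ℝ S)
    (hYc : ContDiffOn ℝ (⊤ : ℕ∞) Y T) {φ : E → E} (hφ : ContDiffOn ℝ (⊤ : ℕ∞) φ S)
    (hST : MapsTo φ S T) (hh : 0 ≤ h) (i : ℕ) {x : E} (hx : x ∈ S) :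
    ‖iteratedFDerivWithin ℝ i (eulerStep Y h ∘ φ) S x‖
      ≤ ‖iteratedFDerivWithin ℝ i φ S x‖ + h * ‖iteratedFDerivWithin ℝ i (Y ∘ φ) S x‖ := by
  have hφx : ContDiffWithinAt ℝ i φ S x := (hφ x hx).of_le (by exact_mod_cast le_top)
  have hYφx : ContDiffWithinAt ℝ i (Y ∘ φ) S x :=
    ((hYc.comp hφ hST) x hx).of_le (by exact_mod_cast le_top)
  have heq : iteratedFDerivWithin ℝ i (eulerStep Y h ∘ φ) S x
      = iteratedFDerivWithin ℝ i φ S x + h • iteratedFDerivWithin ℝ i (Y ∘ φ) S x := by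
    rw [← iteratedFDerivWithin_const_smul_apply hYφx hS hx]
    exact iteratedFDerivWithin_add_apply hφx (hYφx.const_smul h) hS hx
  calc _ ≤ ‖iteratedFDerivWithin ℝ i φ S x‖ + ‖h • iteratedFDerivWithin ℝ i (Y ∘ φ) S x‖ :=
        heq ▸ norm_add_le _ _
    _ = _ := by rw [norm_smul, Real.norm_of_nonneg hh]

/-- The constant `c` in `‖Dⁱ⁺¹ ψ‖ ≤ c Lⁱ`, `i < n`, for the flow `ψ` up to time `1` of a vector
field with `‖Dʲ⁺¹ Y‖ ≤ K Lʲ`, `j < n`; it majorises the Faà di Bruno–Gronwall recursion on the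
order. -/
noncomputable def flowConst (K : ℝ) : ℕ → ℝ
  | 0 => 1
  | n + 1 => max (flowConst K n)
      (2 * Real.exp (Fintype.card (OrderedFinpartition (n + 1)) * K * flowConst K n ^ (n + 1)))

lemma one_le_flowConst (K : ℝ) (n : ℕ) : 1 ≤ flowConst K n := by
  induction n with
  | zero => exact le_rfl
  | succ n ih => exact ih.trans (le_max_left _ _)

lemma norm_iteratedFDerivWithin_eulerStep_iterate_le (hs : 0 < s) (hb : 0 ≤ b) (hsb : s + b ≤ r)
    (hY : ∀ x ∈ closedBall (0 : E) r, ‖Y x‖ ≤ b)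
    (hYc : ContDiffOn ℝ (⊤ : ℕ∞) Y (closedBall 0 r)) {K L : ℝ} (hK : 0 ≤ K) (hL : 1 ≤ L) {n : ℕ}
    (hYK : ∀ j < n, ∀ y ∈ closedBall (0 : E) r,
      ‖iteratedFDerivWithin ℝ (j + 1) Y (closedBall 0 r) y‖ ≤ K * L ^ j)
    (hh : 0 ≤ h) (hqh : q * h ≤ 1) {i : ℕ} (hi : i < n) {x : E} (hx : x ∈ closedBall (0 : E) s) :
    ‖iteratedFDerivWithin ℝ (i + 1) (eulerStep Y h)^[q] (closedBall 0 s) x‖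
      ≤ flowConst K n * L ^ i := by
  have hUs := uniqueDiffOn_closedBall hs (0 : E)
  have hUr := uniqueDiffOn_closedBall (show 0 < r by linarith) (0 : E)
  induction n generalizing q i with
  | zero => exact absurd hi i.not_lt_zero
  | succ n ih =>
    have hlow : ∀ p : ℕ, p * h ≤ 1 → ∀ i < n,
        ‖iteratedFDerivWithin ℝ (i + 1) (eulerStep Y h)^[p] (closedBall 0 s) x‖
          ≤ flowConst K n * L ^ i := fun p hp i hi ↦ ih (fun j hj ↦ hYK j (by omega)) hp hi
    rcases (Nat.le_of_lt_succ hi).lt_or_eq with hlt | rfl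
    · exact (hlow q hqh i hlt).trans (by gcongr; exact le_max_left _ _)
    set M := Fintype.card (OrderedFinpartition (i + 1)) * K * flowConst K i ^ (i + 1)
    have hM : 0 ≤ M := by have := one_le_flowConst K i; positivity
    have hLi : 1 ≤ L ^ i := one_le_pow₀ hL
    set v : ℕ → ℝ := fun p ↦
      L ^ i + ‖iteratedFDerivWithin ℝ (i + 1) (eulerStep Y h)^[p] (closedBall 0 s) x‖
    have hv₀ : v 0 ≤ 2 * L ^ i := by
      have : v 0 ≤ L ^ i + 1 := add_le_add_right (norm_iteratedFDerivWithin_id_le hUs hx i) _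
      linarith
    have hv : ∀ p < q, v (p + 1) ≤ (1 + h * M) * v p := by
      intro p hpq
      have hp : p * h ≤ 1 := le_trans (by gcongr) hqh
      have hmaps := mapsTo_eulerStep_iterate hb hsb hY hh hp
      have hsmooth := contDiffOn_eulerStep_iterate hb hsb hY hYc hh hp
      have hstep := norm_iteratedFDerivWithin_eulerStep_comp_le hUs hYc hsmooth hmaps hh (i + 1) hx
      have hcomp := norm_iteratedFDerivWithin_comp_le_of_top_order hUs hUr hYc hsmooth hmaps hx hK
        (zero_lt_one.trans_le hL) (one_le_flowConst K i)
        (fun j hj ↦ hYK j (by omega) _ (hmaps hx)) (hlow p hp)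
      rw [← Function.iterate_succ'] at hstep
      calc v (p + 1) ≤ v p + h * (M * v p) := by
            have := mul_le_mul_of_nonneg_left hcomp hh
            simp only [v]
            linarith
        _ = (1 + h * M) * v p := by ring
    calc _ ≤ v q := le_add_of_nonneg_left (by positivity)
      _ ≤ Real.exp (q * (h * M)) * v 0 :=
          le_exp_mul_of_succ_le_one_add_mul (mul_nonneg hh hM) (by positivity) hv
      _ ≤ Real.exp M * (2 * L ^ i) := by
          gcongr
          rw [← mul_assoc]
          exact mul_le_of_le_one_left hM hqh
      _ = 2 * Real.exp M * L ^ i := by ring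
      _ ≤ flowConst K (i + 1) * L ^ i := by gcongr; exact le_max_right _ _

end Euler

section EulerConvergence

variable {E : Type*} [NormedAddCommGroup E] [NormedSpace ℝ E] {S : Set E} {Y : E → E} {b K h : ℝ}
  {γ : ℝ → E}

lemma norm_sub_eulerStep_le (hb : 0 ≤ b) (hK : 0 ≤ K) (hYb : ∀ x ∈ S, ‖Y x‖ ≤ b)
    (hYK : ∀ x ∈ S, ∀ y ∈ S, ‖Y y - Y x‖ ≤ K * ‖y - x‖) (hh : 0 ≤ h) {t : ℝ}
    (hγS : ∀ τ ∈ Icc t (t + h), γ τ ∈ S)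
    (hγ : ∀ τ ∈ Icc t (t + h), HasDerivWithinAt γ (Y (γ τ)) (Icc t (t + h)) τ) :
    ‖γ (t + h) - eulerStep Y h (γ t)‖ ≤ K * b * h ^ 2 := by
  have ht : t ∈ Icc t (t + h) := left_mem_Icc.2 (le_add_of_nonneg_right hh)
  have hγb : ∀ τ ∈ Icc t (t + h), ‖γ τ - γ t‖ ≤ b * (τ - t) :=
    norm_image_sub_le_of_norm_deriv_le_segment' hγ
      fun τ hτ ↦ hYb _ (hγS τ (Ico_subset_Icc_self hτ))
  have hderiv : ∀ τ ∈ Ico t (t + h), ‖Y (γ τ) - (1 : ℝ) • Y (γ t)‖ ≤ K * (b * h) := by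
    intro τ hτ
    rw [one_smul]
    refine (hYK _ (hγS t ht) _ (hγS τ (Ico_subset_Icc_self hτ))).trans ?_
    gcongr
    refine (hγb τ (Ico_subset_Icc_self hτ)).trans ?_
    gcongr
    linarith [hτ.2]
  have hrem := norm_image_sub_le_of_norm_deriv_le_segment'
    (fun τ hτ ↦ (hγ τ hτ).sub ((hasDerivAt_id τ).hasDerivWithinAt.smul_const (Y (γ t))))
    hderiv (t + h) (right_mem_Icc.2 (le_add_of_nonneg_right hh))
  calc ‖γ (t + h) - eulerStep Y h (γ t)‖
      = ‖γ (t + h) - (t + h) • Y (γ t) - (γ t - t • Y (γ t))‖ := by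
        rw [eulerStep, add_smul]
        congr 1
        abel
    _ ≤ K * (b * h) * (t + h - t) := hrem
    _ = K * b * h ^ 2 := by ring

lemma norm_eulerStep_iterate_sub_le (hb : 0 ≤ b) (hK : 0 ≤ K) (hYb : ∀ x ∈ S, ‖Y x‖ ≤ b)
    (hYK : ∀ x ∈ S, ∀ y ∈ S, ‖Y y - Y x‖ ≤ K * ‖y - x‖) (hh : 0 ≤ h) {N : ℕ}
    (hγS : ∀ t ∈ Icc 0 (N * h), γ t ∈ S)
    (hγ : ∀ t ∈ Icc 0 (N * h), HasDerivWithinAt γ (Y (γ t)) (Icc 0 (N * h)) t)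
    (hiter : ∀ q < N, (eulerStep Y h)^[q] (γ 0) ∈ S) :
    ‖(eulerStep Y h)^[N] (γ 0) - γ (N * h)‖ ≤ Real.exp (N * (h * K)) * (b * h) := by
  -- The shift by `b * h` turns the affine error recursion into a linear one.
  set v : ℕ → ℝ := fun q ↦ ‖(eulerStep Y h)^[q] (γ 0) - γ (q * h)‖ + b * h
  have hv₀ : v 0 = b * h := by simp [v]
  have hv : ∀ q < N, v (q + 1) ≤ (1 + h * K) * v q := by
    intro q hq
    set y := (eulerStep Y h)^[q] (γ 0)
    set z := γ (q * h)
    have hqN : q * h + h ≤ N * h := by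
      have : ((q + 1 : ℕ) : ℝ) * h ≤ N * h := by gcongr; exact hq
      push_cast at this
      linarith
    have hsub : Icc (q * h) (q * h + h) ⊆ Icc 0 (N * h) := Icc_subset_Icc (by positivity) hqN
    have hz : z ∈ S := hγS _ (hsub (left_mem_Icc.2 (le_add_of_nonneg_right hh)))
    have htrunc : ‖γ (q * h + h) - eulerStep Y h z‖ ≤ K * b * h ^ 2 :=
      norm_sub_eulerStep_le hb hK hYb hYK hh (fun τ hτ ↦ hγS τ (hsub hτ))
        fun τ hτ ↦ (hγ τ (hsub hτ)).mono hsub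
    have hprop : ‖eulerStep Y h y - eulerStep Y h z‖ ≤ ‖y - z‖ + h * (K * ‖y - z‖) := by
      calc _ = ‖(y - z) + h • (Y y - Y z)‖ := by
            rw [eulerStep, eulerStep, add_sub_add_comm, smul_sub]
        _ ≤ ‖y - z‖ + h * ‖Y y - Y z‖ :=
            (norm_add_le _ _).trans_eq (by rw [norm_smul, Real.norm_of_nonneg hh])
        _ ≤ _ := by gcongr; exact hYK _ hz _ (hiter q hq)
    calc v (q + 1) = ‖eulerStep Y h y - γ (q * h + h)‖ + b * h := by
          simp only [v, Function.iterate_succ_apply', Nat.cast_succ, add_one_mul, y]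
      _ ≤ ‖eulerStep Y h y - eulerStep Y h z‖ + ‖γ (q * h + h) - eulerStep Y h z‖ + b * h := by
          rw [norm_sub_rev (γ (q * h + h))]
          gcongr
          exact norm_sub_le_norm_sub_add_norm_sub _ _ _
      _ ≤ (‖y - z‖ + h * (K * ‖y - z‖)) + K * b * h ^ 2 + b * h := by gcongr
      _ = (1 + h * K) * v q := by simp only [v, y, z]; ring
  calc _ ≤ v N := le_add_of_nonneg_right (mul_nonneg hb hh)
    _ ≤ Real.exp (N * (h * K)) * v 0 :=
        le_exp_mul_of_succ_le_one_add_mul (mul_nonneg hh hK) (by positivity) hv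
    _ = _ := by rw [hv₀]

end EulerConvergence

section Limit

open Filter Topology

variable {E F ι : Type*} [NormedAddCommGroup E] [NormedSpace ℝ E] [NormedAddCommGroup F]
  [NormedSpace ℝ F] {p : Filter ι}

lemma hasFDerivWithinAt_of_tendsto_of_lipschitz [p.NeBot] {S : Set E} (hS : Convex ℝ S)
    {G : ι → E → F} {G' : ι → E → E →L[ℝ] F} {c : ℝ} (hc : 0 ≤ c)
    (hG : ∀ N, ∀ x ∈ S, HasFDerivWithinAt (G N) (G' N x) S x)
    (hG' : ∀ N, ∀ x ∈ S, ∀ y ∈ S, ‖G' N y - G' N x‖ ≤ c * ‖y - x‖)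
    {g : E → F} {g' : E →L[ℝ] F} {x : E} (hx : x ∈ S)
    (hlim : ∀ y ∈ S, Tendsto (fun N ↦ G N y) p (𝓝 (g y)))
    (hlim' : Tendsto (fun N ↦ G' N x) p (𝓝 g')) : HasFDerivWithinAt g g' S x := by
  have htaylor : ∀ y ∈ S, ‖g y - g x - g' (y - x)‖ ≤ c * ‖y - x‖ ^ 2 := fun y hy ↦
    le_of_tendsto (((hlim y hy).sub (hlim x hx)).sub
      ((ContinuousLinearMap.apply ℝ F (y - x)).continuous.tendsto _ |>.comp hlim')).norm
      (.of_forall fun N ↦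
        norm_sub_sub_apply_le_of_lipschitz_fderiv hS hc (hG N) (hG' N) hx hy)
  refine .of_isLittleO (Asymptotics.IsBigO.trans_isLittleO (g := fun y ↦ ‖y - x‖ ^ 2)
    (.of_bound c ?_) ((Asymptotics.isLittleO_pow_sub_sub x one_lt_two).mono nhdsWithin_le_nhds))
  filter_upwards [self_mem_nhdsWithin] with y hy
  rw [norm_pow, norm_norm]
  exact htaylor y hy

variable {s : ℝ} {φ : ι → E → F}

lemma uniformCauchySeqOn_iteratedFDerivWithin (hs : 0 < s)
    (hφ : ∀ N, ContDiffOn ℝ (⊤ : ℕ∞) (φ N) (closedBall 0 s))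
    (hbdd : ∀ i, ∃ U, ∀ N, ∀ x ∈ closedBall (0 : E) s,
      ‖iteratedFDerivWithin ℝ (i + 1) (φ N) (closedBall 0 s) x‖ ≤ U)
    (hcauchy : UniformCauchySeqOn φ p (closedBall 0 s)) (i : ℕ) :
    UniformCauchySeqOn (fun N ↦ iteratedFDerivWithin ℝ i (φ N) (closedBall 0 s)) p
      (closedBall 0 s) := by
  have hU := uniqueDiffOn_closedBall hs (0 : E)
  have hsub : ∀ i N M, ∀ x ∈ closedBall (0 : E) s,
      iteratedFDerivWithin ℝ i (φ N - φ M) (closedBall 0 s) x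
        = iteratedFDerivWithin ℝ i (φ N) (closedBall 0 s) x
          - iteratedFDerivWithin ℝ i (φ M) (closedBall 0 s) x := fun i N M x hx ↦
    iteratedFDerivWithin_sub_apply ((hφ N x hx).of_le (by exact_mod_cast le_top))
      ((hφ M x hx).of_le (by exact_mod_cast le_top)) hU hx
  induction i with
  | zero =>
    intro u hu
    obtain ⟨ε, hε, hεu⟩ := mem_uniformity_dist.1 hu
    filter_upwards [hcauchy _ (dist_mem_uniformity hε)] with m hm x hx
    refine hεu ?_
    rw [dist_eq_norm, ← hsub 0 _ _ x hx, norm_iteratedFDerivWithin_zero]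
    simpa [dist_eq_norm] using hm x hx
  | succ i ih =>
    intro u hu
    obtain ⟨ε, hε, hεu⟩ := mem_uniformity_dist.1 hu
    obtain ⟨U, hU_le⟩ := hbdd (i + 1)
    set h := min s (ε / (32 * (|U| + 1)))
    have hh : 0 < h := lt_min hs (by positivity)
    have hhU : h * (32 * (|U| + 1)) ≤ ε := (le_div_iff₀ (by positivity)).1 (min_le_right _ _)
    filter_upwards [ih _ (dist_mem_uniformity (show 0 < ε * h / 16 by positivity))] with m hm x hx
    refine hεu ?_
    rw [dist_eq_norm, ← hsub _ _ _ x hx]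
    have hlow : ∀ y ∈ closedBall (0 : E) s,
        ‖iteratedFDerivWithin ℝ i (φ m.1 - φ m.2) (closedBall 0 s) y‖ ≤ ε * h / 16 := fun y hy ↦ by
      rw [hsub i _ _ y hy, ← dist_eq_norm]
      exact (hm y hy).le
    have hhigh : ∀ y ∈ closedBall (0 : E) s,
        ‖iteratedFDerivWithin ℝ (i + 2) (φ m.1 - φ m.2) (closedBall 0 s) y‖ ≤ 2 * |U| :=
      fun y hy ↦ by
        rw [hsub (i + 2) _ _ y hy, two_mul]
        exact norm_sub_le_of_le ((hU_le m.1 y hy).trans (le_abs_self U))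
          ((hU_le m.2 y hy).trans (le_abs_self U))
    calc _ ≤ 4 * (ε * h / 16) / h + 8 * (2 * |U|) * h :=
          norm_iteratedFDerivWithin_le_of_landau hU subset_rfl ((hφ m.1).sub (hφ m.2)) i hlow hhigh
            hh (min_le_left _ _) hx
      _ = ε / 4 + 16 * |U| * h := by field_simp; ring
      _ < ε := by linarith

variable [CompleteSpace F] [p.NeBot] {f : E → F}

lemma contDiffOn_and_tendsto_iteratedFDerivWithin_of_tendstoUniformlyOn (hs : 0 < s)
    (hφ : ∀ N, ContDiffOn ℝ (⊤ : ℕ∞) (φ N) (closedBall 0 s))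
    (hbdd : ∀ i, ∃ U, ∀ N, ∀ x ∈ closedBall (0 : E) s,
      ‖iteratedFDerivWithin ℝ (i + 1) (φ N) (closedBall 0 s) x‖ ≤ U)
    (hlim : TendstoUniformlyOn φ f p (closedBall 0 s)) :
    ContDiffOn ℝ (⊤ : ℕ∞) f (closedBall 0 s) ∧ ∀ i, ∀ x ∈ closedBall (0 : E) s,
      Tendsto (fun N ↦ iteratedFDerivWithin ℝ i (φ N) (closedBall 0 s) x) p
        (𝓝 (iteratedFDerivWithin ℝ i f (closedBall 0 s) x)) := by
  have hU := uniqueDiffOn_closedBall hs (0 : E)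
  have hexists : ∀ x i, ∃ P, x ∈ closedBall (0 : E) s →
      Tendsto (fun N ↦ iteratedFDerivWithin ℝ i (φ N) (closedBall 0 s) x) p (𝓝 P) := by
    intro x i
    by_cases hx : x ∈ closedBall (0 : E) s
    · obtain ⟨P, hP⟩ := CompleteSpace.complete <|
        (uniformCauchySeqOn_iteratedFDerivWithin hs hφ hbdd hlim.uniformCauchySeqOn i).cauchy_map hx
      exact ⟨P, fun _ ↦ hP⟩
    · exact ⟨0, fun h ↦ absurd h hx⟩
  choose P hP using hexists
  have hP_deriv : ∀ i, ∀ x ∈ closedBall (0 : E) s,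
      HasFDerivWithinAt (fun y ↦ P y i) (P x (i + 1)).curryLeft (closedBall 0 s) x := by
    intro i x hx
    obtain ⟨U, hU_le⟩ := hbdd (i + 1)
    refine hasFDerivWithinAt_of_tendsto_of_lipschitz (convex_closedBall 0 s) (abs_nonneg U)
      (fun N y hy ↦ hasFDerivWithinAt_iteratedFDerivWithin hU (hφ N) i hy) (fun N y hy z hz ↦ ?_) hx
      (fun y hy ↦ hP y i hy)
      (((continuousMultilinearCurryLeftEquiv ℝ (fun _ : Fin (i + 1) ↦ E) F).continuous.tendsto
        _).comp (hP x (i + 1) hx))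
    rw [norm_curryLeft_sub_curryLeft]
    exact norm_iteratedFDerivWithin_sub_le hU (hφ N) (i + 1) (convex_closedBall _ _) subset_rfl
      (fun w hw ↦ (hU_le N w hw).trans (le_abs_self U)) hy hz
  have hP_taylor : HasFTaylorSeriesUpToOn (⊤ : ℕ∞) f P (closedBall 0 s) :=
    ⟨fun x hx ↦ tendsto_nhds_unique
      (((continuousMultilinearCurryFin0 ℝ E F).continuous.tendsto _).comp (hP x 0 hx))
      (hlim.tendsto_at hx),
    fun i _ ↦ hP_deriv i, fun i _ x hx ↦ (hP_deriv i x hx).continuousWithinAt⟩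
  refine ⟨hP_taylor.contDiffOn, fun i x hx ↦ ?_⟩
  rw [← hP_taylor.eq_iteratedFDerivWithin_of_uniqueDiffOn (by exact_mod_cast le_top) hU hx]
  exact hP x i hx

end Limit

section Flow

open Filter Topology

variable {E F : Type*} [NormedAddCommGroup E] [NormedSpace ℝ E] [NormedAddCommGroup F]
  [NormedSpace ℝ F] {r s : ℝ} {Y : E → E} {ψ : ℝ → E → E}

/-- `ψ` is a flow of the vector field `Y` up to time `1`, started on the closed ball of radius `s`
and staying in the closed ball of radius `r`, both about the origin. -/
structure IsFlowOn (Y : E → E) (s r : ℝ) (ψ : ℝ → E → E) : Prop where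
  zero_apply : ∀ x ∈ closedBall (0 : E) s, ψ 0 x = x
  mem_closedBall : ∀ t ∈ Icc (0 : ℝ) 1, ∀ x ∈ closedBall (0 : E) s, ψ t x ∈ closedBall 0 r
  hasDerivWithinAt : ∀ t ∈ Icc (0 : ℝ) 1, ∀ x ∈ closedBall (0 : E) s,
    HasDerivWithinAt (fun τ ↦ ψ τ x) (Y (ψ t x)) (Icc 0 1) t

lemma IsFlowOn.mapsTo_one (hψ : IsFlowOn Y s r ψ) :
    MapsTo (ψ 1) (closedBall 0 s) (closedBall 0 r) :=
  hψ.mem_closedBall 1 (right_mem_Icc.2 zero_le_one)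

lemma IsFlowOn.norm_one_le (hψ : IsFlowOn Y s r ψ)
    (hY : ∀ x ∈ closedBall (0 : E) r, ‖Y x‖ ≤ ‖x‖) {x : E} (hx : x ∈ closedBall (0 : E) s) :
    ‖ψ 1 x‖ ≤ Real.exp 1 * ‖x‖ := by
  have hgronwall : ‖ψ 1 x‖ ≤ gronwallBound ‖x‖ 1 0 (1 - 0) :=
    norm_le_gronwallBound_of_norm_deriv_right_le (f := fun τ ↦ ψ τ x)
      (fun t ht ↦ (hψ.hasDerivWithinAt t ht x hx).continuousWithinAt)
      (fun t ht ↦ (hψ.hasDerivWithinAt t (Ico_subset_Icc_self ht) x hx).mono_of_mem_nhdsWithin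
        (Icc_mem_nhdsGE_of_mem ht))
      (congrArg norm (hψ.zero_apply x hx)).le
      (fun t ht ↦ by
        simpa using hY _ (hψ.mem_closedBall t (Ico_subset_Icc_self ht) x hx))
      1 (right_mem_Icc.2 zero_le_one)
  rwa [gronwallBound_ε0, sub_zero, one_mul, mul_comm] at hgronwall

lemma norm_sub_le_of_norm_iteratedFDerivWithin_one_le {S : Set E} (hS : UniqueDiffOn ℝ S)
    (hSc : Convex ℝ S) {g : E → F} (hg : ContDiffOn ℝ (⊤ : ℕ∞) g S) {c : ℝ}
    (hc : ∀ x ∈ S, ‖iteratedFDerivWithin ℝ 1 g S x‖ ≤ c) {x y : E} (hx : x ∈ S) (hy : y ∈ S) :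
    ‖g y - g x‖ ≤ c * ‖y - x‖ := by
  simpa only [iteratedFDerivWithin_zero_eq_comp, Function.comp_apply, ← map_sub,
    LinearIsometryEquiv.norm_map]
    using norm_iteratedFDerivWithin_sub_le hS hg 0 hSc subset_rfl hc hx hy

lemma IsFlatOn.apply_zero {g : E → F} (hg : IsFlatOn r g) : g 0 = 0 := by
  rw [← norm_eq_zero, ← norm_iteratedFDerivWithin_zero (𝕜 := ℝ) (f := g) (s := closedBall 0 r),
    hg.iteratedFDerivWithin_zero, norm_zero]

variable {b : ℝ}

lemma IsFlowOn.norm_eulerStep_iterate_sub_one_le (hψ : IsFlowOn Y s r ψ) (hb : 0 ≤ b)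
    (hsb : s + b ≤ r) (hYb : ∀ x ∈ closedBall (0 : E) r, ‖Y x‖ ≤ b)
    (hYlip : ∀ x ∈ closedBall (0 : E) r, ∀ y ∈ closedBall (0 : E) r, ‖Y y - Y x‖ ≤ ‖y - x‖)
    {N : ℕ} {h : ℝ} (hh : 0 ≤ h) (hNh : N * h = 1) {x : E} (hx : x ∈ closedBall (0 : E) s) :
    ‖(eulerStep Y h)^[N] x - ψ 1 x‖ ≤ Real.exp 1 * (b * h) := by
  have hiter : ∀ q < N, (eulerStep Y h)^[q] (ψ 0 x) ∈ closedBall (0 : E) r := fun q hq ↦ by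
    rw [hψ.zero_apply x hx]
    exact mapsTo_eulerStep_iterate hb hsb hYb hh (hNh ▸ by gcongr) hx
  have herror := norm_eulerStep_iterate_sub_le hb zero_le_one hYb
    (fun x hx y hy ↦ (hYlip x hx y hy).trans_eq (one_mul _).symm) hh (N := N)
    (γ := fun t ↦ ψ t x) (by rw [hNh]; exact fun t ht ↦ hψ.mem_closedBall t ht x hx)
    (by rw [hNh]; exact fun t ht ↦ hψ.hasDerivWithinAt t ht x hx) hiter
  rwa [hψ.zero_apply x hx, mul_one, hNh] at herror

lemma IsFlowOn.tendstoUniformlyOn_eulerStep_iterate (hψ : IsFlowOn Y s r ψ) (hb : 0 ≤ b)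
    (hsb : s + b ≤ r) (hYb : ∀ x ∈ closedBall (0 : E) r, ‖Y x‖ ≤ b)
    (hYlip : ∀ x ∈ closedBall (0 : E) r, ∀ y ∈ closedBall (0 : E) r, ‖Y y - Y x‖ ≤ ‖y - x‖) :
    TendstoUniformlyOn (fun N : ℕ ↦ (eulerStep Y (1 / ((N : ℝ) + 1)))^[N + 1]) (ψ 1) atTop
      (closedBall 0 s) := by
  have hlim : Tendsto (fun N : ℕ ↦ Real.exp 1 * (b * (1 / ((N : ℝ) + 1)))) atTop (𝓝 0) := by
    simpa using (tendsto_one_div_add_atTop_nhds_zero_nat.const_mul b).const_mul (Real.exp 1)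
  refine Metric.tendstoUniformlyOn_iff.2 fun ε hε ↦ ?_
  filter_upwards [hlim.eventually_lt_const hε] with N hN x hx
  rw [dist_comm, dist_eq_norm]
  exact (hψ.norm_eulerStep_iterate_sub_one_le hb hsb hYb hYlip (by positivity)
    (by push_cast; field_simp) hx).trans_lt hN

variable [CompleteSpace E]

lemma IsFlowOn.contDiffOn_one_and_norm_iteratedFDerivWithin_le (hψ : IsFlowOn Y s r ψ)
    (hY : IsFlatOn r Y) (hs : 0 < s) (hb : 0 ≤ b) (hsb : s + b ≤ r)
    (hYb : ∀ x ∈ closedBall (0 : E) r, ‖Y x‖ ≤ b)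
    (hYlip : ∀ x ∈ closedBall (0 : E) r, ∀ y ∈ closedBall (0 : E) r, ‖Y y - Y x‖ ≤ ‖y - x‖) :
    ContDiffOn ℝ (⊤ : ℕ∞) (ψ 1) (closedBall 0 s) ∧ ∀ {K L : ℝ} {n : ℕ}, 0 ≤ K → 1 ≤ L →
      (∀ j < n, ∀ y ∈ closedBall (0 : E) r,
        ‖iteratedFDerivWithin ℝ (j + 1) Y (closedBall 0 r) y‖ ≤ K * L ^ j) →
      ∀ i < n, ∀ x ∈ closedBall (0 : E) s,
        ‖iteratedFDerivWithin ℝ (i + 1) (ψ 1) (closedBall 0 s) x‖ ≤ flowConst K n * L ^ i := by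
  have hr : 0 < r := by linarith
  have hstep : ∀ N : ℕ, 0 ≤ 1 / ((N : ℝ) + 1) := fun N ↦ by positivity
  have htime : ∀ N : ℕ, ((N + 1 : ℕ) : ℝ) * (1 / ((N : ℝ) + 1)) ≤ 1 := fun N ↦ by
    push_cast
    exact (mul_one_div_cancel (by positivity)).le
  obtain ⟨hsmooth, htendsto⟩ :=
    contDiffOn_and_tendsto_iteratedFDerivWithin_of_tendstoUniformlyOn hs
      (fun N ↦ contDiffOn_eulerStep_iterate hb hsb hYb hY.contDiffOn (hstep N) (htime N))
      (fun i ↦ by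
        obtain ⟨K, hK₀, hK⟩ := hY.exists_bound_pow_of_le hr (i + 1) 0
        exact ⟨_, fun N x hx ↦ norm_iteratedFDerivWithin_eulerStep_iterate_le hs hb hsb hYb
          hY.contDiffOn hK₀ le_rfl (fun j hj y hy ↦ by simpa using hK (j + 1) (by omega) y hy)
          (hstep N) (htime N) i.lt_succ_self hx⟩)
      (hψ.tendstoUniformlyOn_eulerStep_iterate hb hsb hYb hYlip)
  exact ⟨hsmooth, fun hK hL hYK i hi x hx ↦ le_of_tendsto (htendsto (i + 1) x hx).norm <|
    .of_forall fun N ↦ norm_iteratedFDerivWithin_eulerStep_iterate_le hs hb hsb hYb hY.contDiffOn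
      hK hL hYK (hstep N) (htime N) hi hx⟩

end Flow

section BallNorms

variable {E F : Type*} [NormedAddCommGroup E] [NormedSpace ℝ E] [NormedAddCommGroup F]
  [NormedSpace ℝ F] {r : ℝ} {g : E → F} {n j : ℕ}

/-- The `C^n` norm on the closed ball of radius `r`; `cnNorm` is the case of vector fields on
Euclidean space. -/
noncomputable def ballNorm (r : ℝ) (n : ℕ) (g : E → F) : ℝ :=
  ⨆ p : (closedBall (0 : E) r : Set E) × Fin (n + 1),
    ‖iteratedFDerivWithin ℝ p.2 g (closedBall 0 r) p.1‖

/-- The weighted norm `⟨g⟩_{n,k,r}` of a map flat at the origin; `flatNorm` is the case of real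
functions on Euclidean space. -/
noncomputable def ballFlatNorm (r : ℝ) (n k : ℕ) (g : E → F) : ℝ :=
  ⨆ p : (closedBall (0 : E) r \ {0} : Set E) × Fin (n + 1),
    ‖(p.1 : E)‖ ^ (-(k : ℤ)) * ‖iteratedFDerivWithin ℝ p.2 g (closedBall 0 r) p.1‖

lemma ballNorm_nonneg (r : ℝ) (n : ℕ) (g : E → F) : 0 ≤ ballNorm r n g :=
  Real.iSup_nonneg fun _ ↦ norm_nonneg _

lemma ballFlatNorm_nonneg (r : ℝ) (n k : ℕ) (g : E → F) : 0 ≤ ballFlatNorm r n k g :=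
  Real.iSup_nonneg fun _ ↦ by positivity

lemma IsFlatOn.norm_iteratedFDerivWithin_le_ballNorm (hg : IsFlatOn r g) (hr : 0 < r)
    (hj : j ≤ n) {x : E} (hx : x ∈ closedBall (0 : E) r) :
    ‖iteratedFDerivWithin ℝ j g (closedBall 0 r) x‖ ≤ ballNorm r n g := by
  obtain ⟨K, -, hK⟩ := hg.exists_bound_pow_of_le hr n 0
  have hbdd : BddAbove (range fun p : (closedBall (0 : E) r : Set E) × Fin (n + 1) ↦
      ‖iteratedFDerivWithin ℝ p.2 g (closedBall 0 r) p.1‖) := by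
    refine ⟨K, ?_⟩
    rintro _ ⟨⟨y, i⟩, rfl⟩
    simpa using hK i i.is_le y y.2
  exact le_ciSup hbdd (⟨x, hx⟩, ⟨j, Nat.lt_succ_of_le hj⟩)

lemma ballFlatNorm_le {k : ℕ} {K : ℝ} (hK : 0 ≤ K)
    (h : ∀ j ≤ n, ∀ x ∈ closedBall (0 : E) r,
      ‖iteratedFDerivWithin ℝ j g (closedBall 0 r) x‖ ≤ K * ‖x‖ ^ k) :
    ballFlatNorm r n k g ≤ K :=
  Real.iSup_le (fun p ↦ zpow_neg_mul_le_of_le_mul_pow (norm_nonneg _) hK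
    (h p.2 p.2.is_le p.1 p.1.2.1)) hK

lemma IsFlatOn.norm_iteratedFDerivWithin_le_ballFlatNorm (hg : IsFlatOn r g) (hr : 0 < r)
    (k : ℕ) (hj : j ≤ n) {x : E} (hx : x ∈ closedBall (0 : E) r) :
    ‖iteratedFDerivWithin ℝ j g (closedBall 0 r) x‖ ≤ ballFlatNorm r n k g * ‖x‖ ^ k := by
  rcases eq_or_ne x 0 with rfl | hx₀
  · rw [hg.iteratedFDerivWithin_zero, norm_zero]
    exact mul_nonneg (ballFlatNorm_nonneg r n k g) (by positivity)
  obtain ⟨K, hK₀, hK⟩ := hg.exists_bound_pow_of_le hr n k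
  have hbdd : BddAbove (range fun p : (closedBall (0 : E) r \ {0} : Set E) × Fin (n + 1) ↦
      ‖(p.1 : E)‖ ^ (-(k : ℤ)) * ‖iteratedFDerivWithin ℝ p.2 g (closedBall 0 r) p.1‖) := by
    refine ⟨K, ?_⟩
    rintro _ ⟨⟨y, i⟩, rfl⟩
    exact zpow_neg_mul_le_of_le_mul_pow (norm_nonneg _) hK₀ (hK i i.is_le y y.2.1)
  have hle := le_ciSup hbdd (⟨x, hx, hx₀⟩, ⟨j, Nat.lt_succ_of_le hj⟩)
  rwa [zpow_neg, zpow_natCast, inv_mul_le_iff₀' (by positivity)] at hle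

lemma IsFlatOn.ballFlatNorm_mono (hg : IsFlatOn r g) (hr : 0 < r) (k : ℕ) (hj : j ≤ n) :
    ballFlatNorm r j k g ≤ ballFlatNorm r n k g :=
  ballFlatNorm_le (ballFlatNorm_nonneg r n k g) fun _ hi _ hx ↦
    hg.norm_iteratedFDerivWithin_le_ballFlatNorm hr k (hi.trans hj) hx

lemma ballFlatNorm_eq_zero_of_eqOn_zero (n k : ℕ) (hg : EqOn g 0 (closedBall 0 r)) :
    ballFlatNorm r n k g = 0 := by
  refine (ballFlatNorm_le le_rfl fun j _ x hx ↦ ?_).antisymm (ballFlatNorm_nonneg r n k g)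
  simp [iteratedFDerivWithin_congr hg hx, Pi.zero_def]

lemma IsFlatOn.norm_iteratedFDerivWithin_succ_le_of_scale (hg : IsFlatOn r g) (hr : 0 < r)
    (hg₁ : ballNorm r 1 g ≤ 1) {B : ℝ} (hB : 0 < B) (hgB : ballNorm r (n + 1) g ≤ B ^ n)
    (hj : j ≤ n) {x : E} (hx : x ∈ closedBall (0 : E) r) :
    ‖iteratedFDerivWithin ℝ (j + 1) g (closedBall 0 r) x‖ ≤ 12 ^ (n * n) * B ^ j := by
  rw [add_comm j 1]
  simpa only [pow_zero, mul_one] using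
    hg.norm_iteratedFDerivWithin_interpolation hr 0 1 n one_pos hB
      (fun y hy ↦ by
        simpa using (hg.norm_iteratedFDerivWithin_le_ballNorm hr le_rfl hy).trans hg₁)
      (fun y hy ↦ by
        simpa using (hg.norm_iteratedFDerivWithin_le_ballNorm hr (add_comm 1 n).le hy).trans hgB)
      hj hx

lemma IsFlatOn.norm_iteratedFDerivWithin_le_of_scale (hg : IsFlatOn r g) (hr : 0 < r) {k : ℕ}
    {a B : ℝ} (ha : 0 < a) (hB : 0 < B) (hga : ballFlatNorm r 0 k g ≤ a)
    (hgB : ballFlatNorm r n k g ≤ a * B ^ n) (hj : j ≤ n) {x : E}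
    (hx : x ∈ closedBall (0 : E) r) :
    ‖iteratedFDerivWithin ℝ j g (closedBall 0 r) x‖ ≤ 12 ^ (n * n) * a * B ^ j * ‖x‖ ^ k := by
  have hinterp := hg.norm_iteratedFDerivWithin_interpolation hr k 0 n ha hB
    (fun y hy ↦ (hg.norm_iteratedFDerivWithin_le_ballFlatNorm hr k le_rfl hy).trans (by gcongr))
    (fun y hy ↦ (hg.norm_iteratedFDerivWithin_le_ballFlatNorm hr k n.zero_add.le hy).trans
      (by gcongr)) hj hx
  rwa [zero_add] at hinterp

lemma IsFlatOn.norm_sub_le_of_ballNorm_one_le (hg : IsFlatOn r g) (hr : 0 < r)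
    (hg₁ : ballNorm r 1 g ≤ 1) :
    ∀ x ∈ closedBall (0 : E) r, ∀ y ∈ closedBall (0 : E) r, ‖g y - g x‖ ≤ ‖y - x‖ :=
  fun _ hx _ hy ↦ (norm_sub_le_of_norm_iteratedFDerivWithin_one_le (uniqueDiffOn_closedBall hr 0)
    (convex_closedBall 0 r) hg.contDiffOn
    (fun _ hz ↦ (hg.norm_iteratedFDerivWithin_le_ballNorm hr le_rfl hz).trans hg₁)
    hx hy).trans_eq (one_mul _)

end BallNorms

section Pullback

variable {E F : Type*} [NormedAddCommGroup E] [NormedSpace ℝ E] [NormedAddCommGroup F]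
  [NormedSpace ℝ F] {r s : ℝ} {f : E → F} {n k : ℕ}

lemma norm_iteratedFDerivWithin_comp_le_of_scale {S : Set E} (hS : UniqueDiffOn ℝ S) (hr : 0 < r)
    (hf : ContDiffOn ℝ (⊤ : ℕ∞) f (closedBall 0 r)) {φ : E → E}
    (hφ : ContDiffOn ℝ (⊤ : ℕ∞) φ S) (hmaps : MapsTo φ S (closedBall 0 r))
    {K B c e : ℝ} (hK : 0 ≤ K) (hB : 0 ≤ B) (hc : 1 ≤ c) {x : E} (hx : x ∈ S)
    (hfK : ∀ j ≤ n, ∀ y ∈ closedBall (0 : E) r,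
      ‖iteratedFDerivWithin ℝ j f (closedBall 0 r) y‖ ≤ K * B ^ j * ‖y‖ ^ k)
    (hφe : ‖φ x‖ ≤ e * ‖x‖)
    (hφc : ∀ i < n, ‖iteratedFDerivWithin ℝ (i + 1) φ S x‖ ≤ c * B ^ i) :
    ‖iteratedFDerivWithin ℝ n (f ∘ φ) S x‖
      ≤ Fintype.card (OrderedFinpartition n) * K * e ^ k * (c * B) ^ n * ‖x‖ ^ k := by
  have hφk : ‖φ x‖ ^ k ≤ e ^ k * ‖x‖ ^ k := by rw [← mul_pow]; gcongr
  have hφB : ∀ i, 0 < i → i ≤ n → B * ‖iteratedFDerivWithin ℝ i φ S x‖ ≤ (c * B) ^ i := by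
    intro i hi hin
    obtain ⟨i, rfl⟩ := Nat.exists_eq_add_of_le' hi
    calc _ ≤ B * (c * B ^ i) := by gcongr; exact hφc i hin
      _ = c * B ^ (i + 1) := by ring
      _ ≤ c ^ (i + 1) * B ^ (i + 1) := by gcongr; exact le_self_pow₀ hc i.succ_ne_zero
      _ = (c * B) ^ (i + 1) := (mul_pow _ _ _).symm
  calc _ ≤ Fintype.card (OrderedFinpartition n) * (K * (e ^ k * ‖x‖ ^ k) * (c * B) ^ n) := by
        refine norm_iteratedFDerivWithin_comp_le_card hS (uniqueDiffOn_closedBall hr 0) hf hφ hmaps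
          hx (mul_nonneg hK ((pow_nonneg (norm_nonneg _) k).trans hφk)) hB (fun j hj _ ↦ ?_) hφB
        calc _ ≤ K * B ^ j * ‖φ x‖ ^ k := hfK j hj _ (hmaps hx)
          _ ≤ K * B ^ j * (e ^ k * ‖x‖ ^ k) := by gcongr
          _ = K * (e ^ k * ‖x‖ ^ k) * B ^ j := by ring
    _ = _ := by ring

/-- The constant of the pullback estimate: the number of terms in Faà di Bruno's formula, the
interpolation constant `12 ^ (n * n)`, the Gronwall bound `‖ψ 1 x‖ ≤ e ‖x‖` to the power `k`, and
the bound on the derivatives of the flow. -/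
noncomputable def pullbackConst (n k : ℕ) : ℝ :=
  (∑ p ∈ Finset.range (n + 1), (Fintype.card (OrderedFinpartition p) : ℝ)) * 12 ^ (n * n)
    * Real.exp 1 ^ k * flowConst (12 ^ (n * n)) n ^ n

lemma pullbackConst_pos (n k : ℕ) : 0 < pullbackConst n k := by
  have hflow := zero_lt_one.trans_le (one_le_flowConst (12 ^ (n * n)) n)
  unfold pullbackConst
  positivity

variable [CompleteSpace E] {Y : E → E} {ψ : ℝ → E → E}

lemma IsFlowOn.ballFlatNorm_comp_one_le_of_scale (hψ : IsFlowOn Y s r ψ) (hY : IsFlatOn r Y)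
    (hf : IsFlatOn r f) (hs : 0 < s) (hY₀ : s + ballNorm r 0 Y ≤ r) (hY₁ : ballNorm r 1 Y ≤ 1)
    {a B : ℝ} (ha : 0 < a) (hB : 1 ≤ B) (hfa : ballFlatNorm r 0 k f ≤ a)
    (hfB : ballFlatNorm r n k f ≤ a * B ^ n) (hYB : ballNorm r (n + 1) Y ≤ B ^ n) :
    ballFlatNorm s n k (f ∘ ψ 1) ≤ pullbackConst n k * (a * B ^ n) := by
  have hr : 0 < r := by linarith [ballNorm_nonneg r 0 Y]
  have hB₀ : 0 < B := zero_lt_one.trans_le hB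
  have hY_bound : ∀ x ∈ closedBall (0 : E) r, ‖Y x‖ ≤ ballNorm r 0 Y := fun x hx ↦ by
    simpa using hY.norm_iteratedFDerivWithin_le_ballNorm hr le_rfl (j := 0) hx
  have hY_lip := hY.norm_sub_le_of_ballNorm_one_le hr hY₁
  have hY_norm : ∀ x ∈ closedBall (0 : E) r, ‖Y x‖ ≤ ‖x‖ := fun x hx ↦ by
    simpa [hY.apply_zero] using hY_lip 0 (mem_closedBall_self hr.le) x hx
  obtain ⟨hψ_smooth, hψ_deriv⟩ := hψ.contDiffOn_one_and_norm_iteratedFDerivWithin_le hY hs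
    (ballNorm_nonneg r 0 Y) hY₀ hY_bound hY_lip
  have hc := one_le_flowConst (12 ^ (n * n)) n
  set c := flowConst (12 ^ (n * n)) n
  refine ballFlatNorm_le (by have := pullbackConst_pos n k; positivity) fun p hp x hx ↦ ?_
  calc _ ≤ Fintype.card (OrderedFinpartition p) * (12 ^ (n * n) * a) * Real.exp 1 ^ k * (c * B) ^ p
        * ‖x‖ ^ k :=
        norm_iteratedFDerivWithin_comp_le_of_scale (uniqueDiffOn_closedBall hs 0) hr hf.contDiffOn
          hψ_smooth hψ.mapsTo_one (by positivity) hB₀.le hc hx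
          (fun j hj y hy ↦ hf.norm_iteratedFDerivWithin_le_of_scale hr ha hB₀ hfa hfB
            (hj.trans hp) hy)
          (hψ.norm_one_le hY_norm hx)
          (fun i hi ↦ hψ_deriv (by positivity) hB (fun j hj y hy ↦
            hY.norm_iteratedFDerivWithin_succ_le_of_scale hr hY₁ hB₀ hYB hj.le hy) i
            (hi.trans_le hp) x hx)
    _ ≤ (∑ p ∈ Finset.range (n + 1), (Fintype.card (OrderedFinpartition p) : ℝ))
        * (12 ^ (n * n) * a) * Real.exp 1 ^ k * (c * B) ^ n * ‖x‖ ^ k := by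
        gcongr
        · exact Finset.single_le_sum (f := fun p ↦ (Fintype.card (OrderedFinpartition p) : ℝ))
            (fun _ _ ↦ Nat.cast_nonneg _) (Finset.mem_range_succ_iff.2 hp)
        · exact one_le_mul_of_one_le_of_one_le hc hB
    _ = _ := by rw [pullbackConst, mul_pow]; ring

lemma exists_scale {n : ℕ} {a b y : ℝ} (ha : 0 < a) (hab : a ≤ b) (hy : 0 ≤ y)
    (hn : n = 0 → b ≤ a ∧ y ≤ 1) :
    ∃ B, 1 ≤ B ∧ b ≤ a * B ^ n ∧ y ≤ B ^ n ∧ a * B ^ n ≤ b + a * y := by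
  have hba : 1 ≤ b / a := (one_le_div ha).2 hab
  rcases eq_or_ne n 0 with rfl | hn₀
  · obtain ⟨hle, hy₁⟩ := hn rfl
    exact ⟨1, le_rfl, by simpa using hle, by simpa using hy₁, by
      simpa using hab.trans (le_add_of_nonneg_right (mul_nonneg ha.le hy))⟩
  · have hroot : ((b / a + y) ^ (n : ℝ)⁻¹) ^ n = b / a + y :=
      Real.rpow_inv_natCast_pow (by positivity) hn₀
    have hmul : a * (b / a + y) = b + a * y := by field_simp
    refine ⟨(b / a + y) ^ (n : ℝ)⁻¹, Real.one_le_rpow (by linarith) (by positivity), ?_⟩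
    rw [hroot, hmul]
    exact ⟨le_add_of_nonneg_right (mul_nonneg ha.le hy), by linarith, le_rfl⟩

theorem flow_pullback_estimate_general (hY : IsFlatOn r Y) (hf : IsFlatOn r f) (hs : 0 < s)
    (hY₀ : s + ballNorm r 0 Y ≤ r) (hY₁ : ballNorm r 1 Y ≤ 1) (hψ : IsFlowOn Y s r ψ) (n k : ℕ) :
    ballFlatNorm s n k (f ∘ ψ 1)
      ≤ pullbackConst n k
        * (ballFlatNorm r n k f + ballFlatNorm r 0 k f * ballNorm r (n + 1) Y) := by
  have hr : 0 < r := by linarith [ballNorm_nonneg r 0 Y]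
  have hC := (pullbackConst_pos n k).le
  rcases (ballFlatNorm_nonneg r 0 k f).eq_or_lt with hf₀ | hf₀
  · have hf_zero : EqOn (f ∘ ψ 1) 0 (closedBall 0 s) := fun x hx ↦ by
      simpa [← hf₀] using
        hf.norm_iteratedFDerivWithin_le_ballFlatNorm hr k (n := 0) le_rfl (hψ.mapsTo_one hx)
    rw [ballFlatNorm_eq_zero_of_eqOn_zero n k hf_zero, ← hf₀, zero_mul, add_zero]
    exact mul_nonneg hC (ballFlatNorm_nonneg r n k f)
  · obtain ⟨B, hB, hfB, hYB, hle⟩ := exists_scale (n := n) hf₀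
      (hf.ballFlatNorm_mono hr k n.zero_le) (ballNorm_nonneg r (n + 1) Y)
      (by rintro rfl; exact ⟨le_rfl, hY₁⟩)
    exact (hψ.ballFlatNorm_comp_one_le_of_scale hY hf hs hY₀ hY₁ hf₀ hB le_rfl hfB hYB).trans
      (mul_le_mul_of_nonneg_left hle hC)

end Pullback

/-- there is `θ > 0` (depending only on `m`) and constants
`C(n,k,r) > 0` depending continuously on `r`, such that for `0 < s < r` and a smooth
flat vector field `Y` on `B̄_r` with `‖Y‖_{0,r} < (r−s)θ`, `‖Y‖_{1,r} < θ`, the flow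
`ψ : [0,1] × B̄_s → B_r` of `Y` satisfies: for every smooth `f` on `B̄_r` flat at the
origin, `⟨f ∘ ψ¹⟩_{n,k,s} ≤ C(n,k,r) (⟨f⟩_{n,k,r} + ⟨f⟩_{0,k,r} ‖Y‖_{n+1,r})`. -/
theorem flow_pullback_estimate (m : ℕ) (hm : 1 ≤ m) :
    ∃ θ > (0 : ℝ), ∃ C : ℕ → ℕ → ℝ → ℝ,
      (∀ n k : ℕ, ContinuousOn (C n k) (Set.Ioi 0) ∧ ∀ r : ℝ, 0 < r → 0 < C n k r) ∧
      ∀ r s : ℝ, 0 < s → s < r →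
        ∀ Y : EuclideanSpace ℝ (Fin m) → EuclideanSpace ℝ (Fin m),
          ContDiffOn ℝ (⊤ : ℕ∞) Y (closedBall 0 r) → FlatVF m r Y →
          cnNorm m r 0 Y < (r - s) * θ → cnNorm m r 1 Y < θ →
          ∀ ψ : ℝ → EuclideanSpace ℝ (Fin m) → EuclideanSpace ℝ (Fin m),
            (∀ x ∈ closedBall (0 : EuclideanSpace ℝ (Fin m)) s, ψ 0 x = x) →
            (∀ t ∈ Set.Icc (0 : ℝ) 1,
              ∀ x ∈ closedBall (0 : EuclideanSpace ℝ (Fin m)) s,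
                ψ t x ∈ ball (0 : EuclideanSpace ℝ (Fin m)) r ∧
                HasDerivWithinAt (fun τ => ψ τ x) (Y (ψ t x)) (Set.Icc 0 1) t) →
            ∀ f : EuclideanSpace ℝ (Fin m) → ℝ,
              ContDiffOn ℝ (⊤ : ℕ∞) f (closedBall 0 r) →
              (∀ i : ℕ, iteratedFDerivWithin ℝ i f (closedBall 0 r) 0 = 0) →
              ∀ n k : ℕ,
                flatNorm m s n k (fun x => f (ψ 1 x)) ≤
                  C n k r * (flatNorm m r n k f +
                    flatNorm m r 0 k f * cnNorm m r (n + 1) Y) := by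
  refine ⟨1, one_pos, fun n k _ ↦ pullbackConst n k,
    fun n k ↦ ⟨continuousOn_const, fun _ _ ↦ pullbackConst_pos n k⟩, ?_⟩
  intro r s hs hsr Y hYc hYf hY₀ hY₁ ψ hψ₀ hψ f hfc hff n k
  have hr : 0 < r := hs.trans hsr
  have hY : IsFlatOn r Y := isFlatOn_of_finiteDimensional hr hYc hYf
  have hf : IsFlatOn r f := isFlatOn_of_finiteDimensional hr hfc hff
  have hψ_flow : IsFlowOn Y s r ψ :=
    ⟨hψ₀, fun t ht x hx ↦ ball_subset_closedBall (hψ t ht x hx).1, fun t ht x hx ↦ (hψ t ht x hx).2⟩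
  have hY₀' : s + ballNorm r 0 Y ≤ r := by
    change s + cnNorm m r 0 Y ≤ r
    linarith
  exact flow_pullback_estimate_general hY hf hs hY₀' hY₁.le hψ_flow n k
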